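/- arXiv:2404.01351 — 2 statements merged into one kernel-verified Lean document; each statement's English description precedes it below -/
import Mathlib

section
/- (Theorem 2, Robust Disagreement Equality.) Suppose robust confidence–prediction calibration holds with over-confident class k' and constants b ≥ 1, 0 ≤ a ≤ 1. Then for every N ≥ 1, ∫_Θ Err(θ) dμ(θ) = b · ∫_{Θ^{N+1}} PDD_N(θ₀, θ₁, …, θ_N) d(μ^{⊗(N+1)}) − C, where C = (b − a) ∫_Ω h̃_{k'}(X(ω)) (1 − h̃_{k'}(X(ω))) dν(ω). -/
open MeasureTheory

/-!
Averaging the error over hypotheses first, a test point `ω` contributes `1 - h̃_{Y ω}(ω)`, so the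
mean test error is `∑ₖ E[1{Y = k} (1 - h̃ₖ)]`. As `1 - h̃ₖ` is a function of `h̃ₖ`, calibration of
class `k` with factor `cₖ` lets us replace `1{Y = k}` by `cₖ h̃ₖ`, which gives
`∑ₖ cₖ E[h̃ₖ (1 - h̃ₖ)]`. Two independent hypotheses disagree at `ω` with probability
`∑ₖ h̃ₖ(ω) (1 - h̃ₖ(ω))`, so the mean disagreement is the same sum with all `cₖ = 1`.
-/

open ProbabilityTheory

section General

variable {α β : Type*} [mα : MeasurableSpace α] [MeasurableSpace β]

theorem integral_measureReal_prodMk_swap {μ : Measure α} {ν : Measure β} [SFinite μ] [SFinite ν]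
    {s : Set (α × β)} (hs : MeasurableSet s) (hs_fin : (μ.prod ν) s ≠ ⊤) :
    ∫ x, ν.real {y | (x, y) ∈ s} ∂μ = ∫ y, μ.real {x | (x, y) ∈ s} ∂ν := by
  have swap := integral_integral_swap (μ := μ) (ν := ν)
    (f := fun x y => s.indicator (1 : α × β → ℝ) (x, y))
    ((integrable_indicator_iff hs).2 (integrableOn_const hs_fin))
  have left (x : α) : ∫ y, s.indicator (1 : α × β → ℝ) (x, y) ∂ν = ν.real {y | (x, y) ∈ s} :=
    integral_indicator_one (measurable_prodMk_left hs)
  have right (y : β) : ∫ x, s.indicator (1 : α × β → ℝ) (x, y) ∂μ = μ.real {x | (x, y) ∈ s} :=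
    integral_indicator_one (measurable_prodMk_right hs)
  simpa only [left, right] using swap

theorem integral_mul_eq_of_condExp_ae_eq {m : MeasurableSpace α} {μ : Measure[mα] α}
    (hm : m ≤ mα) [SigmaFinite (μ.trim hm)] {φ f g : α → ℝ} (hφ : StronglyMeasurable[m] φ)
    (hφf : Integrable (fun x => φ x * f x) μ) (hf : Integrable f μ) (hfg : μ[f | m] =ᵐ[μ] g) :
    ∫ x, φ x * f x ∂μ = ∫ x, φ x * g x ∂μ := by
  calc ∫ x, φ x * f x ∂μ
      = ∫ x, (μ[φ * f | m]) x ∂μ := (integral_condExp hm).symm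
    _ = ∫ x, φ x * g x ∂μ := integral_congr_ae <| by
        filter_upwards [condExp_mul_of_stronglyMeasurable_left hφ hφf hf, hfg] with x hpull hx
        rw [hpull, Pi.mul_apply, hx]

variable {ι : Type*} [Fintype ι] [MeasurableSpace ι] [MeasurableSingletonClass ι]

theorem measureReal_ne_of_indepFun {P : Measure α} [IsProbabilityMeasure P] {U V : α → ι}
    (hU : Measurable U) (hV : Measurable V) (hUV : IndepFun U V P) :
    P.real {x | U x ≠ V x} = ∑ k, P.real (U ⁻¹' {k}) * (1 - P.real (V ⁻¹' {k})) := by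
  have cover : {x | U x ≠ V x} = ⋃ k, U ⁻¹' {k} ∩ V ⁻¹' {k}ᶜ := by
    ext x
    simp [eq_comm]
  have disjoint : Pairwise (Function.onFun Disjoint fun k => U ⁻¹' {k} ∩ V ⁻¹' {k}ᶜ) :=
    fun k l hkl => Disjoint.mono Set.inter_subset_left Set.inter_subset_left
      ((Set.disjoint_singleton.2 hkl).preimage U)
  rw [cover, measureReal_iUnion_fintype disjoint fun k =>
    (hU (measurableSet_singleton k)).inter (hV (measurableSet_singleton k).compl)]
  refine Finset.sum_congr rfl fun k _ => ?_
  rw [measureReal_def, hUV.measure_inter_preimage_eq_mul _ _ (measurableSet_singleton k)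
    (measurableSet_singleton k).compl, ENNReal.toReal_mul, ← measureReal_def, ← measureReal_def,
    Set.preimage_compl, probReal_compl_eq_one_sub (hV (measurableSet_singleton k))]

theorem measureReal_pi_ne {I : Type*} [Fintype I] {μ : Measure α} [IsProbabilityMeasure μ]
    {g : α → ι} (hg : Measurable g) {i j : I} (hij : i ≠ j) :
    (Measure.pi fun _ : I => μ).real {x | g (x i) ≠ g (x j)} =
      ∑ k, μ.real (g ⁻¹' {k}) * (1 - μ.real (g ⁻¹' {k})) := by
  have indep : IndepFun (fun x : I → α => g (x i)) (fun x => g (x j)) (Measure.pi fun _ => μ) :=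
    (iIndepFun_pi fun _ => hg.aemeasurable).indepFun hij
  have marginal (l : I) (k : ι) :
      (Measure.pi fun _ : I => μ).real ((fun x => g (x l)) ⁻¹' {k}) = μ.real (g ⁻¹' {k}) :=
    (measurePreserving_eval (fun _ : I => μ) l).measureReal_preimage
      (hg (measurableSet_singleton k)).nullMeasurableSet
  have hgi (l : I) : Measurable fun x : I → α => g (x l) := hg.comp (measurable_pi_apply l)
  simpa only [marginal] using measureReal_ne_of_indepFun (hgi i) (hgi j) indep

end General

section Disagreement

variable {Θ Ω ι : Type*}

/-- The expectation function `h̃ₖ`: the `μ`-probability that a random hypothesis predicts class `k`.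
Hypotheses are evaluated directly at test points `ω`: the feature map `X` of the paper is absorbed
into `h`, both here and in the definitions below. -/
def expectationFunction [MeasurableSpace Θ] (μ : Measure Θ) (h : Θ × Ω → ι) (k : ι) (ω : Ω) :
    ℝ :=
  μ.real {θ | h (θ, ω) = k}

/-- The test error of the hypothesis `θ` with respect to the labels `Y`. -/
def testError [MeasurableSpace Ω] (ν : Measure Ω) (h : Θ × Ω → ι) (Y : Ω → ι) (θ : Θ) : ℝ :=
  ν.real {ω | h (θ, ω) ≠ Y ω}

/-- The prediction disagreement with dropouts `PDD_N` of the hypothesis `θs 0` with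
`θs 1, …, θs N`; for `N = 0` it takes the junk value `0`. -/
noncomputable def predictionDisagreement [MeasurableSpace Ω] [DecidableEq ι] (ν : Measure Ω)
    (h : Θ × Ω → ι) {N : ℕ} (θs : Fin (N + 1) → Θ) : ℝ :=
  ∫ ω, (1 / (N : ℝ)) *
    ∑ i : Fin N, (if h (θs 0, ω) = h (θs i.succ, ω) then (0 : ℝ) else 1) ∂ν

/-- Confidence–prediction calibration of the single class `k` with factor `c`: given the value of
`h̃ₖ`, the label is `k` with probability `c * h̃ₖ`. Over-confidence in `k` means `c ≤ 1`. -/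
def IsClassCalibrated [MeasurableSpace Θ] [MeasurableSpace Ω] [DecidableEq ι] (μ : Measure Θ)
    (ν : Measure Ω) (h : Θ × Ω → ι) (Y : Ω → ι) (k : ι) (c : ℝ) : Prop :=
  ν[(fun ω => if Y ω = k then (1 : ℝ) else 0) |
      MeasurableSpace.comap (expectationFunction μ h k) Real.measurableSpace]
    =ᵐ[ν] fun ω => c * expectationFunction μ h k ω

theorem expectationFunction_mem_Icc [MeasurableSpace Θ] (μ : Measure Θ) [IsProbabilityMeasure μ]
    (h : Θ × Ω → ι) (k : ι) (ω : Ω) : expectationFunction μ h k ω ∈ Set.Icc 0 1 :=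
  ⟨measureReal_nonneg, measureReal_le_one⟩

theorem predictionDisagreement_eq_sum_measureReal [MeasurableSpace Ω] {ν : Measure Ω}
    [IsFiniteMeasure ν] [DecidableEq ι] [MeasurableSpace ι] [MeasurableEq ι] {h : Θ × Ω → ι}
    (hmeas : ∀ θ, Measurable fun ω => h (θ, ω)) {N : ℕ} (θs : Fin (N + 1) → Θ) :
    predictionDisagreement ν h θs =
      (1 / (N : ℝ)) * ∑ i : Fin N, ν.real {ω | h (θs 0, ω) ≠ h (θs i.succ, ω)} := by
  have disagree (i : Fin N) : MeasurableSet {ω | h (θs 0, ω) ≠ h (θs i.succ, ω)} :=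
    (measurableSet_eq_fun (hmeas _) (hmeas _)).compl
  have as_indicator (i : Fin N) :
      (fun ω => if h (θs 0, ω) = h (θs i.succ, ω) then (0 : ℝ) else 1) =
        {ω | h (θs 0, ω) ≠ h (θs i.succ, ω)}.indicator 1 := by
    ext ω
    simp [Set.indicator_apply]
  rw [predictionDisagreement, integral_const_mul, integral_finsetSum]
  · simp only [as_indicator, integral_indicator_one (disagree _)]
  · intro i _
    rw [as_indicator]
    exact (integrable_const 1).indicator (disagree i)

variable [MeasurableSpace Θ] [MeasurableSpace Ω] [MeasurableSpace ι] [MeasurableSingletonClass ι]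
  {μ : Measure Θ} {ν : Measure Ω} {h : Θ × Ω → ι} {Y : Ω → ι}

theorem measurable_expectationFunction [SFinite μ] (hmeas : Measurable h) (k : ι) :
    Measurable (expectationFunction μ h k) :=
  (measurable_measure_prodMk_right (hmeas (measurableSet_singleton k))).ennreal_toReal

variable [IsProbabilityMeasure μ] [IsFiniteMeasure ν]

theorem integrable_expectationFunction_mul_one_sub (hmeas : Measurable h) (k : ι) :
    Integrable (fun ω => expectationFunction μ h k ω * (1 - expectationFunction μ h k ω)) ν := by
  have hmeas_k := measurable_expectationFunction (μ := μ) hmeas k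
  refine Integrable.of_mem_Icc 0 1 (hmeas_k.mul (hmeas_k.const_sub 1)).aemeasurable
    (ae_of_all _ fun ω => ?_)
  obtain ⟨nonneg, le_one⟩ := expectationFunction_mem_Icc μ h k ω
  constructor <;> nlinarith

theorem measurableSet_predictions_ne [Countable ι] {I : Type*} (hmeas : Measurable h) (i j : I) :
    MeasurableSet {p : (I → Θ) × Ω | h (p.1 i, p.2) ≠ h (p.1 j, p.2)} := by
  have prediction_measurable (l : I) : Measurable fun p : (I → Θ) × Ω => h (p.1 l, p.2) :=
    hmeas.comp (((measurable_pi_apply l).comp measurable_fst).prodMk measurable_snd)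
  exact (measurableSet_eq_fun (prediction_measurable i) (prediction_measurable j)).compl

theorem integral_measureReal_predictions_ne [Fintype ι] {I : Type*} [Fintype I]
    (hmeas : Measurable h) {i j : I} (hij : i ≠ j) :
    ∫ θs, ν.real {ω | h (θs i, ω) ≠ h (θs j, ω)} ∂(Measure.pi fun _ : I => μ) =
      ∑ k, ∫ ω, expectationFunction μ h k ω * (1 - expectationFunction μ h k ω) ∂ν := by
  calc ∫ θs, ν.real {ω | h (θs i, ω) ≠ h (θs j, ω)} ∂(Measure.pi fun _ : I => μ)
      = ∫ ω, (Measure.pi fun _ : I => μ).real {θs | h (θs i, ω) ≠ h (θs j, ω)} ∂ν :=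
        integral_measureReal_prodMk_swap (measurableSet_predictions_ne hmeas i j)
          (measure_ne_top _ _)
    _ = ∫ ω, ∑ k, expectationFunction μ h k ω * (1 - expectationFunction μ h k ω) ∂ν :=
        integral_congr_ae <| ae_of_all _ fun ω =>
          measureReal_pi_ne (hmeas.comp measurable_prodMk_right) hij
    _ = ∑ k, ∫ ω, expectationFunction μ h k ω * (1 - expectationFunction μ h k ω) ∂ν :=
        integral_finsetSum _ fun k _ => integrable_expectationFunction_mul_one_sub hmeas k

variable [DecidableEq ι]

omit [MeasurableSpace Θ] in
theorem integrable_ite_label_eq (hY : Measurable Y) (k : ι) :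
    Integrable (fun ω => if Y ω = k then (1 : ℝ) else 0) ν :=
  Integrable.of_mem_Icc 0 1
    (Measurable.ite (hY (measurableSet_singleton k)) measurable_const measurable_const).aemeasurable
    (ae_of_all _ fun ω => by split_ifs <;> simp)

theorem integrable_one_sub_expectationFunction_mul_ite (hmeas : Measurable h) (hY : Measurable Y)
    (k : ι) :
    Integrable (fun ω => (1 - expectationFunction μ h k ω) * if Y ω = k then (1 : ℝ) else 0) ν := by
  refine (integrable_ite_label_eq hY k).bdd_mul (c := 1)
    ((measurable_expectationFunction hmeas k).const_sub 1).aestronglyMeasurable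
    (ae_of_all _ fun ω => ?_)
  obtain ⟨nonneg, le_one⟩ := expectationFunction_mem_Icc μ h k ω
  rw [Real.norm_eq_abs, abs_le]
  constructor <;> linarith

theorem IsClassCalibrated.integral_one_sub_mul_ite {k : ι} {c : ℝ} (hmeas : Measurable h)
    (hY : Measurable Y) (hcal : IsClassCalibrated μ ν h Y k c) :
    ∫ ω, (1 - expectationFunction μ h k ω) * (if Y ω = k then (1 : ℝ) else 0) ∂ν =
      c * ∫ ω, expectationFunction μ h k ω * (1 - expectationFunction μ h k ω) ∂ν := by
  have one_sub_measurable :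
      Measurable[MeasurableSpace.comap (expectationFunction μ h k) Real.measurableSpace]
        fun ω => 1 - expectationFunction μ h k ω :=
    (comap_measurable _).const_sub 1
  rw [integral_mul_eq_of_condExp_ae_eq (measurable_expectationFunction hmeas k).comap_le
    one_sub_measurable.stronglyMeasurable
    (integrable_one_sub_expectationFunction_mul_ite hmeas hY k) (integrable_ite_label_eq hY k) hcal,
    ← integral_const_mul]
  exact integral_congr_ae (ae_of_all _ fun ω => by ring)

section FiniteClasses

variable [Fintype ι]

theorem integral_testError (hmeas : Measurable h) (hY : Measurable Y) :
    ∫ θ, testError ν h Y θ ∂μ =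
      ∑ k, ∫ ω, (1 - expectationFunction μ h k ω) * (if Y ω = k then (1 : ℝ) else 0) ∂ν := by
  have misclassified : MeasurableSet {p : Θ × Ω | h p ≠ Y p.2} :=
    (measurableSet_eq_fun hmeas (hY.comp measurable_snd)).compl
  have prob_misclassified (ω : Ω) :
      μ.real {θ | h (θ, ω) ≠ Y ω} = 1 - expectationFunction μ h (Y ω) ω :=
    probReal_compl_eq_one_sub ((hmeas.comp measurable_prodMk_right) (measurableSet_singleton _))
  calc ∫ θ, testError ν h Y θ ∂μ
      = ∫ ω, μ.real {θ | h (θ, ω) ≠ Y ω} ∂ν :=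
        integral_measureReal_prodMk_swap misclassified (measure_ne_top _ _)
    _ = ∫ ω, ∑ k, (1 - expectationFunction μ h k ω) * (if Y ω = k then (1 : ℝ) else 0) ∂ν := by
        simp only [prob_misclassified, mul_ite, mul_one, mul_zero, Finset.sum_ite_eq,
          Finset.mem_univ, if_true]
    _ = ∑ k, ∫ ω, (1 - expectationFunction μ h k ω) * (if Y ω = k then (1 : ℝ) else 0) ∂ν :=
        integral_finsetSum _ fun k _ =>
          integrable_one_sub_expectationFunction_mul_ite hmeas hY k

theorem integral_testError_of_isClassCalibrated (hmeas : Measurable h) (hY : Measurable Y)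
    {c : ι → ℝ} (hcal : ∀ k, IsClassCalibrated μ ν h Y k (c k)) :
    ∫ θ, testError ν h Y θ ∂μ =
      ∑ k, c k * ∫ ω, expectationFunction μ h k ω * (1 - expectationFunction μ h k ω) ∂ν := by
  rw [integral_testError hmeas hY]
  exact Finset.sum_congr rfl fun k _ => (hcal k).integral_one_sub_mul_ite hmeas hY

theorem integral_predictionDisagreement (hmeas : Measurable h) {N : ℕ} (hN : N ≠ 0) :
    ∫ θs, predictionDisagreement ν h θs ∂(Measure.pi fun _ : Fin (N + 1) => μ) =
      ∑ k, ∫ ω, expectationFunction μ h k ω * (1 - expectationFunction μ h k ω) ∂ν := by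
  have disagreement_integrable (i : Fin N) :
      Integrable (fun θs => ν.real {ω | h (θs 0, ω) ≠ h (θs i.succ, ω)})
        (Measure.pi fun _ : Fin (N + 1) => μ) :=
    Measure.integrable_measure_prodMk_left (measurableSet_predictions_ne hmeas 0 i.succ)
      (measure_ne_top _ _)
  simp only [predictionDisagreement_eq_sum_measureReal fun _ => hmeas.comp measurable_prodMk_left]
  rw [integral_const_mul, integral_finsetSum _ fun i _ => disagreement_integrable i]
  simp only [integral_measureReal_predictions_ne hmeas (Fin.succ_ne_zero _).symm,
    Finset.sum_const, Finset.card_univ, Fintype.card_fin, nsmul_eq_mul]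
  field_simp

end FiniteClasses

theorem robust_disagreement_equality_general [Finite ι] (hmeas : Measurable h)
    (hY : Measurable Y) {k' : ι} {a b : ℝ} (calib_over : IsClassCalibrated μ ν h Y k' a)
    (calib_rest : ∀ k, k ≠ k' → IsClassCalibrated μ ν h Y k b) {N : ℕ} (hN : N ≠ 0) :
    ∫ θ, testError ν h Y θ ∂μ =
      b * ∫ θs, predictionDisagreement ν h θs ∂(Measure.pi fun _ : Fin (N + 1) => μ) -
        (b - a) * ∫ ω, expectationFunction μ h k' ω * (1 - expectationFunction μ h k' ω) ∂ν := by
  cases nonempty_fintype ι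
  have calib (k : ι) : IsClassCalibrated μ ν h Y k (b - if k = k' then b - a else 0) := by
    split_ifs with hk
    · simpa only [hk, sub_sub_cancel] using calib_over
    · simpa only [sub_zero] using calib_rest k hk
  rw [integral_testError_of_isClassCalibrated hmeas hY calib,
    integral_predictionDisagreement hmeas hN]
  simp only [sub_mul, ite_mul, zero_mul, Finset.sum_sub_distrib, Finset.mul_sum,
    Finset.sum_ite_eq', Finset.mem_univ, if_true]

end Disagreement

/-- Theorem 2 (Robust Disagreement Equality). -/
theorem robust_disagreement_equality
    {Θ Ω 𝒳 : Type*} [MeasurableSpace Θ] [MeasurableSpace Ω] [MeasurableSpace 𝒳]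
    (μ : Measure Θ) (ν : Measure Ω)
    [IsProbabilityMeasure μ] [IsProbabilityMeasure ν]
    (K : ℕ) (hK : 1 ≤ K)
    (h : Θ × 𝒳 → Fin K) (hmeas : Measurable h)
    (X : Ω → 𝒳) (hX : Measurable X)
    (Y : Ω → Fin K) (hY : Measurable Y)
    (htilde : Fin K → 𝒳 → ℝ)
    (htilde_def : ∀ k x, htilde k x = (μ {θ | h (θ, x) = k}).toReal)
    (Err : Θ → ℝ)
    (Err_def : ∀ θ, Err θ = (ν {ω | h (θ, X ω) ≠ Y ω}).toReal)
    (k' : Fin K) (a b : ℝ) (hb : 1 ≤ b) (ha0 : 0 ≤ a) (ha1 : a ≤ 1)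
    (calib_over :
      ν[(fun ω => if Y ω = k' then (1 : ℝ) else 0) |
          MeasurableSpace.comap (fun ω => htilde k' (X ω)) Real.measurableSpace]
        =ᵐ[ν] fun ω => a * htilde k' (X ω))
    (calib_rest : ∀ k : Fin K, k ≠ k' →
      ν[(fun ω => if Y ω = k then (1 : ℝ) else 0) |
          MeasurableSpace.comap (fun ω => htilde k (X ω)) Real.measurableSpace]
        =ᵐ[ν] fun ω => b * htilde k (X ω))
    (N : ℕ) (hN : 1 ≤ N)
    (PDD : (Fin (N + 1) → Θ) → ℝ)
    (PDD_def : ∀ θs : Fin (N + 1) → Θ,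
      PDD θs = ∫ ω, (1 / (N : ℝ)) *
        ∑ i : Fin N, (if h (θs 0, X ω) = h (θs i.succ, X ω) then (0 : ℝ) else 1) ∂ν) :
    ∫ θ, Err θ ∂μ =
      b * ∫ θs, PDD θs ∂(Measure.pi fun _ : Fin (N + 1) => μ) -
        (b - a) * ∫ ω, htilde k' (X ω) * (1 - htilde k' (X ω)) ∂ν := by
  obtain rfl : htilde = fun k x => μ.real {θ | h (θ, x) = k} := funext₂ htilde_def
  obtain rfl : Err = testError ν (fun p => h (p.1, X p.2)) Y := funext Err_def
  obtain rfl : PDD = predictionDisagreement ν fun p => h (p.1, X p.2) := funext PDD_def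
  exact robust_disagreement_equality_general
    (hmeas.comp (measurable_fst.prodMk (hX.comp measurable_snd))) hY calib_over calib_rest
    (Nat.one_le_iff_ne_zero.1 hN)
end

section
/- (N-sample PDD reduces to the pairwise disagreement.) For every N ≥ 1, the expected prediction disagreement with N dropout inferences does not depend on N and equals the expected pairwise disagreement: ∫_{Θ^{N+1}} PDD_N(θ₀, θ₁, …, θ_N) d(μ^{⊗(N+1)}) = ∫_Ω Σ_{k ∈ Fin K} h̃_k(X(ω)) (1 − h̃_k(X(ω))) dν(ω), and in particular it equals ∫_{Θ×Θ} ( ∫_Ω 1{h(θ, X(ω)) ≠ h(θ', X(ω))} dν(ω) ) d(μ ⊗ μ)(θ, θ'). -/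
open MeasureTheory

/-!
Each summand of `PDD` depends only on the coordinates `θ₀` and `θᵢ`, whose joint law under the
product measure is `μ ⊗ μ`; so all `N` summands have the same mean, the expected pairwise
disagreement. By Fubini the latter is the integral over `ω` of the probability that two independent
hypotheses label `X ω` differently, and splitting this event by the label `k` of the first
hypothesis gives `∑ k, h̃ₖ (1 - h̃ₖ)`.
-/

section PiMeasure

variable {ι : Type*} [Fintype ι]

theorem measurePreserving_eval_prodMk_eval {α : ι → Type*} [∀ i, MeasurableSpace (α i)]
    (μ : ∀ i, Measure (α i)) [∀ i, IsProbabilityMeasure (μ i)] {i j : ι} (hij : i ≠ j) :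
    MeasurePreserving (fun x : ∀ i, α i ↦ (x i, x j)) (Measure.pi μ) ((μ i).prod (μ j)) := by
  have hindep : ProbabilityTheory.IndepFun (Function.eval i) (Function.eval j) (Measure.pi μ) :=
    (ProbabilityTheory.iIndepFun_pi (X := fun _ ↦ id) fun _ ↦ aemeasurable_id).indepFun hij
  refine ⟨by fun_prop, ?_⟩
  calc (Measure.pi μ).map (fun x ↦ (x i, x j))
      = ((Measure.pi μ).map (Function.eval i)).prod ((Measure.pi μ).map (Function.eval j)) :=
        hindep.map_prod_eq_prod_map_map (measurable_pi_apply i).aemeasurable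
          (measurable_pi_apply j).aemeasurable
    _ = (μ i).prod (μ j) := by
        rw [(measurePreserving_eval μ i).map_eq, (measurePreserving_eval μ j).map_eq]

theorem integral_pi_sum_eval_pairs {α E κ : Type*} [MeasurableSpace α]
    [NormedAddCommGroup E] [NormedSpace ℝ E] (μ : Measure α) [IsProbabilityMeasure μ]
    {g : α × α → E} (hg : Integrable g (μ.prod μ)) (s : Finset κ) {a b : κ → ι}
    (hab : ∀ k ∈ s, a k ≠ b k) :
    ∫ x, ∑ k ∈ s, g (x (a k), x (b k)) ∂(Measure.pi fun _ : ι ↦ μ) =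
      s.card • ∫ p, g p ∂(μ.prod μ) := by
  have hpair (k) (hk : k ∈ s) := measurePreserving_eval_prodMk_eval (fun _ : ι ↦ μ) (hab k hk)
  have hint (k) (hk : k ∈ s) : Integrable (fun x : ι → α ↦ g (x (a k), x (b k))) (.pi fun _ ↦ μ) :=
    (hpair k hk).integrable_comp_of_integrable hg
  rw [integral_finsetSum s hint]
  refine Finset.sum_eq_card_nsmul fun k hk ↦ ?_
  rw [← (hpair k hk).map_eq, integral_map (hpair k hk).aemeasurable]
  exact (hpair k hk).map_eq ▸ hg.aestronglyMeasurable

end PiMeasure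

/-- The disagreement of two labellings `f` and `g` of the same data: the `ν`-mass of the points
to which they give different labels. It is real-valued, hence `0` when that mass is infinite. -/
noncomputable def disagreement {Ω κ : Type*} [MeasurableSpace Ω] (ν : Measure Ω) (f g : Ω → κ) :
    ℝ :=
  ν.real {ω | f ω ≠ g ω}

section Disagreement

variable {α β κ : Type*} [MeasurableSpace α] [MeasurableSpace β] [MeasurableSpace κ]

section MeasurableEq

variable [MeasurableEq κ]

theorem measurableSet_ne_fun {f g : α → κ} (hf : Measurable f) (hg : Measurable g) :
    MeasurableSet {a | f a ≠ g a} :=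
  (measurableSet_eq_fun hf hg).compl

theorem integral_ite_eq_disagreement [DecidableEq κ] (μ : Measure α) {f g : α → κ}
    (hf : Measurable f) (hg : Measurable g) :
    ∫ a, (if f a = g a then (0 : ℝ) else 1) ∂μ = disagreement μ f g := by
  rw [disagreement, ← integral_indicator_one (measurableSet_ne_fun hf hg)]
  simp only [Set.indicator_apply, Set.mem_ofPred_eq, ne_eq, ite_not, Pi.one_apply]

theorem integrable_ite_eq [DecidableEq κ] (μ : Measure α) [IsFiniteMeasure μ] {f g : α → κ}
    (hf : Measurable f) (hg : Measurable g) :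
    Integrable (fun a ↦ if f a = g a then (0 : ℝ) else 1) μ := by
  refine .of_bound (Measurable.aestronglyMeasurable ?_) 1 (.of_forall fun a ↦ ?_)
  · exact .ite (measurableSet_eq_fun hf hg) measurable_const measurable_const
  · split_ifs <;> simp

theorem integral_sum_ite_eq_disagreement [DecidableEq κ] {ι : Type*} (μ : Measure α)
    [IsFiniteMeasure μ] (s : Finset ι) {f : α → κ} {g : ι → α → κ}
    (hf : Measurable f) (hg : ∀ i, Measurable (g i)) :
    ∫ a, ∑ i ∈ s, (if f a = g i a then (0 : ℝ) else 1) ∂μ =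
      ∑ i ∈ s, disagreement μ f (g i) := by
  rw [integral_finsetSum s fun i _ ↦ integrable_ite_eq μ hf (hg i)]
  simp only [integral_ite_eq_disagreement μ hf (hg _)]

variable (μ : Measure α) (ν : Measure β) [IsFiniteMeasure μ] [IsFiniteMeasure ν]
  {f g : α × β → κ}

theorem integrable_disagreement_prodMk (hf : Measurable f) (hg : Measurable g) :
    Integrable (fun a ↦ disagreement ν (fun b ↦ f (a, b)) (fun b ↦ g (a, b))) μ :=
  Measure.integrable_measure_prodMk_left (measurableSet_ne_fun hf hg) (measure_ne_top _ _)

theorem integral_disagreement_swap (hf : Measurable f) (hg : Measurable g) :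
    ∫ a, disagreement ν (fun b ↦ f (a, b)) (fun b ↦ g (a, b)) ∂μ =
      ∫ b, disagreement μ (fun a ↦ f (a, b)) (fun a ↦ g (a, b)) ∂ν := by
  classical
  calc ∫ a, disagreement ν (fun b ↦ f (a, b)) (fun b ↦ g (a, b)) ∂μ
      = ∫ a, ∫ b, (if f (a, b) = g (a, b) then (0 : ℝ) else 1) ∂ν ∂μ :=
        integral_congr_ae <| .of_forall fun a ↦
          (integral_ite_eq_disagreement ν (by fun_prop) (by fun_prop)).symm
    _ = ∫ b, ∫ a, (if f (a, b) = g (a, b) then (0 : ℝ) else 1) ∂μ ∂ν :=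
        integral_integral_swap (integrable_ite_eq (μ.prod ν) hf hg)
    _ = ∫ b, disagreement μ (fun a ↦ f (a, b)) (fun a ↦ g (a, b)) ∂ν :=
        integral_congr_ae <| .of_forall fun b ↦
          integral_ite_eq_disagreement μ (by fun_prop) (by fun_prop)

end MeasurableEq

theorem disagreement_prod [Countable κ] [MeasurableSingletonClass κ] (μ : Measure α)
    (ν : Measure β) [IsFiniteMeasure μ] [IsProbabilityMeasure ν] {f : α → κ} {g : β → κ}
    (hf : Measurable f) (hg : Measurable g) :
    disagreement (μ.prod ν) (fun p ↦ f p.1) (fun p ↦ g p.2) =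
      ∑' k, μ.real {a | f a = k} * (1 - ν.real {b | g b = k}) := by
  have hunion : {p : α × β | f p.1 ≠ g p.2} = ⋃ k, (f ⁻¹' {k}) ×ˢ (g ⁻¹' {k})ᶜ := by
    ext p
    simp [eq_comm]
  have hdisj : Pairwise (Function.onFun Disjoint fun k ↦ (f ⁻¹' {k}) ×ˢ (g ⁻¹' {k})ᶜ) :=
    fun k l hkl ↦ Set.disjoint_prod.2 (.inl ((Set.disjoint_singleton.2 hkl).preimage f))
  have hfib (k : κ) : MeasurableSet ((f ⁻¹' {k}) ×ˢ (g ⁻¹' {k})ᶜ) :=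
    (hf (.singleton k)).prod (hg (.singleton k)).compl
  calc disagreement (μ.prod ν) (fun p ↦ f p.1) (fun p ↦ g p.2)
      = ∑' k, (μ.prod ν).real ((f ⁻¹' {k}) ×ˢ (g ⁻¹' {k})ᶜ) := by
        rw [disagreement, hunion, measureReal_def, measure_iUnion hdisj hfib,
          ENNReal.tsum_toReal_eq fun _ ↦ measure_ne_top _ _]
        rfl
    _ = ∑' k, μ.real {a | f a = k} * (1 - ν.real {b | g b = k}) := by
        refine tsum_congr fun k ↦ ?_
        rw [measureReal_prod_prod, probReal_compl_eq_one_sub (hg (.singleton k))]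
        rfl

end Disagreement

theorem pdd_reduces_to_pairwise_general
    {Θ Ω 𝒳 κ : Type*} [MeasurableSpace Θ] [MeasurableSpace Ω] [MeasurableSpace 𝒳]
    [Countable κ] [DecidableEq κ] [MeasurableSpace κ] [MeasurableSingletonClass κ]
    (μ : Measure Θ) (ν : Measure Ω) [IsProbabilityMeasure μ] [IsFiniteMeasure ν]
    (h : Θ × 𝒳 → κ) (hmeas : Measurable h) (X : Ω → 𝒳) (hX : Measurable X)
    (htilde : κ → 𝒳 → ℝ)
    (htilde_def : ∀ k x, htilde k x = (μ {θ | h (θ, x) = k}).toReal)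
    (N : ℕ) (hN : 1 ≤ N)
    (PDD : (Fin (N + 1) → Θ) → ℝ)
    (PDD_def : ∀ θs : Fin (N + 1) → Θ,
      PDD θs = ∫ ω, (1 / (N : ℝ)) *
        ∑ i : Fin N, (if h (θs 0, X ω) = h (θs i.succ, X ω) then (0 : ℝ) else 1) ∂ν) :
    ∫ θs, PDD θs ∂(Measure.pi fun _ : Fin (N + 1) => μ) =
        ∫ ω, ∑' k, htilde k (X ω) * (1 - htilde k (X ω)) ∂ν ∧
      ∫ θs, PDD θs ∂(Measure.pi fun _ : Fin (N + 1) => μ) =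
        ∫ p : Θ × Θ,
          (∫ ω, (if h (p.1, X ω) = h (p.2, X ω) then (0 : ℝ) else 1) ∂ν) ∂(μ.prod μ) := by
  have hfst : Measurable fun q : (Θ × Θ) × Ω ↦ h (q.1.1, X q.2) := by fun_prop
  have hsnd : Measurable fun q : (Θ × Θ) × Ω ↦ h (q.1.2, X q.2) := by fun_prop
  have hdata (θ : Θ) : Measurable fun ω ↦ h (θ, X ω) := by fun_prop
  have hhyp (ω : Ω) : Measurable fun θ ↦ h (θ, X ω) := by fun_prop
  have hN' : (N : ℝ) ≠ 0 := by positivity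
  have hpairwise : ∫ θs, PDD θs ∂(Measure.pi fun _ : Fin (N + 1) => μ) =
      ∫ p : Θ × Θ, disagreement ν (fun ω ↦ h (p.1, X ω)) (fun ω ↦ h (p.2, X ω)) ∂(μ.prod μ) := by
    simp only [PDD_def, integral_const_mul,
      integral_sum_ite_eq_disagreement ν _ (hdata _) fun _ ↦ hdata _]
    rw [ integral_pi_sum_eval_pairs μ
      (integrable_disagreement_prodMk (μ.prod μ) ν hfst hsnd) Finset.univ
      fun i _ ↦ (Fin.succ_ne_zero i).symm]
    simp [hN']
  refine ⟨?_, by simpa only [integral_ite_eq_disagreement ν (hdata _) (hdata _)] using hpairwise⟩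
  rw [hpairwise, integral_disagreement_swap (μ.prod μ) ν hfst hsnd]
  simp only [disagreement_prod μ μ (hhyp _) (hhyp _), htilde_def, measureReal_def]

/-- N-sample PDD reduces to the pairwise disagreement. -/
theorem pdd_reduces_to_pairwise
    {Θ Ω 𝒳 : Type*} [MeasurableSpace Θ] [MeasurableSpace Ω] [MeasurableSpace 𝒳]
    (μ : Measure Θ) (ν : Measure Ω)
    [IsProbabilityMeasure μ] [IsProbabilityMeasure ν]
    (K : ℕ) (hK : 1 ≤ K)
    (h : Θ × 𝒳 → Fin K) (hmeas : Measurable h)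
    (X : Ω → 𝒳) (hX : Measurable X)
    (Y : Ω → Fin K) (hY : Measurable Y)
    (htilde : Fin K → 𝒳 → ℝ)
    (htilde_def : ∀ k x, htilde k x = (μ {θ | h (θ, x) = k}).toReal)
    (N : ℕ) (hN : 1 ≤ N)
    (PDD : (Fin (N + 1) → Θ) → ℝ)
    (PDD_def : ∀ θs : Fin (N + 1) → Θ,
      PDD θs = ∫ ω, (1 / (N : ℝ)) *
        ∑ i : Fin N, (if h (θs 0, X ω) = h (θs i.succ, X ω) then (0 : ℝ) else 1) ∂ν) :
    ∫ θs, PDD θs ∂(Measure.pi fun _ : Fin (N + 1) => μ) =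
        ∫ ω, ∑ k : Fin K, htilde k (X ω) * (1 - htilde k (X ω)) ∂ν ∧
      ∫ θs, PDD θs ∂(Measure.pi fun _ : Fin (N + 1) => μ) =
        ∫ p : Θ × Θ,
          (∫ ω, (if h (p.1, X ω) = h (p.2, X ω) then (0 : ℝ) else 1) ∂ν) ∂(μ.prod μ) := by
  simpa only [tsum_fintype] using
    pdd_reduces_to_pairwise_general μ ν h hmeas X hX htilde htilde_def N hN PDD PDD_def
end
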